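/- Let S be a finite nonempty set of timestamps in ℕ × ℕ, let t be the maximum of S in the lexicographic order, and let r = updateHLC(h, pc, t) for any current clock value h ∈ ℕ × ℕ and any physical clock reading pc ∈ ℕ. Then s <_lex r for every s ∈ S. (This is the core of the paper's monotonic-write and write-follows-reads theorems: a client sends dt equal to the lexicographic maximum of the timestamps of all versions it has previously written and/or read, and the new version's timestamp, obtained by updating the server's HLC with dt, strictly dominates the timestamp of every such earlier version.) -/

import Mathlib

/-- Hybrid logical clock update: given current clock `h = (l', c')`, physical
clock reading `pc`, and incoming timestamp `t = (tl, tc)`, return `(l, c)`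
where `l = max (l', pc, tl)` and `c` is as in the HLC algorithm. -/
def updateHLC (h : ℕ × ℕ) (pc : ℕ) (t : ℕ × ℕ) : ℕ × ℕ :=
  let l := max (max h.1 pc) t.1
  let c :=
    if l = h.1 ∧ l = t.1 then max h.2 t.2 + 1
    else if l = h.1 then h.2 + 1
    else if l = t.1 then t.2 + 1
    else 0
  (l, c)

/-- An update strictly dominates the incoming timestamp: either the first component grows,
or it equals `t.1`, and then the counter is `max h.2 t.2 + 1` or `t.2 + 1`. -/
theorem lex_updateHLC (h : ℕ × ℕ) (pc : ℕ) (t : ℕ × ℕ) :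
    Prod.Lex (· < ·) (· < ·) t (updateHLC h pc t) := by
  rw [Prod.lex_def]
  simp only [updateHLC]
  split_ifs <;> omega

/-- If `t` is the maximum, in the lexicographic order, of a finite nonempty
set `S` of timestamps, then updating any HLC with `t` yields a timestamp that
strictly dominates every element of `S` in the lexicographic order. -/
theorem updateHLC_lex_gt_of_max (S : Finset (ℕ × ℕ)) (hS : S.Nonempty)
    (t : ℕ × ℕ) (htS : t ∈ S)
    (hmax : ∀ s ∈ S, s = t ∨ Prod.Lex (· < ·) (· < ·) s t)
    (h : ℕ × ℕ) (pc : ℕ) :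
    ∀ s ∈ S, Prod.Lex (· < ·) (· < ·) s (updateHLC h pc t) := by
  intro s hs
  rcases hmax s hs with rfl | hst
  · exact lex_updateHLC h pc s
  · exact Trans.trans hst (lex_updateHLC h pc t)
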